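/- There exists an absolute constant C₁ > 0 such that for every 1 < p < ∞, every n ∈ ℕ, every f : C_n → ℝ, and every t > 0, one has ‖e^{tΔ}(f − E f)‖_p ≤ e^{−k₁ t} ‖f − E f‖_p, where k₁ = C₁ · c_p, c_p = 2·min(1/p, 1/p′), and p′ = p/(p−1). -/

import Mathlib

open Finset MeasureTheory Real

noncomputable section

/-- Expectation on the Hamming cube `{-1,1}^n`, modeled as `Fin n → Bool`
(`true ↔ 1`, `false ↔ -1`), with the uniform probability measure. -/
def cubeE {n : ℕ} (f : (Fin n → Bool) → ℝ) : ℝ :=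
  (∑ x : Fin n → Bool, f x) / 2 ^ n

/-- The Walsh monomial `x^S = ∏_{i ∈ S} x_i`. -/
def walsh {n : ℕ} (S : Finset (Fin n)) (x : Fin n → Bool) : ℝ :=
  ∏ i ∈ S, (if x i then (1 : ℝ) else -1)

/-- Fourier coefficient `f̂(S) = E (f · x^S)`. -/
def cubeFourier {n : ℕ} (f : (Fin n → Bool) → ℝ) (S : Finset (Fin n)) : ℝ :=
  cubeE fun x => f x * walsh S x

/-- The heat semigroup `e^{tΔ} f = Σ_S e^{-t|S|} f̂(S) x^S`. -/
def heat1 {n : ℕ} (t : ℝ) (f : (Fin n → Bool) → ℝ) : (Fin n → Bool) → ℝ :=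
  fun x => ∑ S : Finset (Fin n), Real.exp (-t * (S.card : ℝ)) * cubeFourier f S * walsh S x

/-- The fractional heat semigroup `e^{tΔ_γ} f = Σ_S e^{-t|S|^γ} f̂(S) x^S`. -/
def heatFrac {n : ℕ} (γ t : ℝ) (f : (Fin n → Bool) → ℝ) : (Fin n → Bool) → ℝ :=
  fun x => ∑ S : Finset (Fin n), Real.exp (-t * (S.card : ℝ) ^ γ) * cubeFourier f S * walsh S x

/-- The Laplacian `Δf = -Σ_S |S| f̂(S) x^S`. -/
def lap {n : ℕ} (f : (Fin n → Bool) → ℝ) : (Fin n → Bool) → ℝ :=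
  fun x => -∑ S : Finset (Fin n), (S.card : ℝ) * cubeFourier f S * walsh S x

/-- The fractional Laplacian `Δ_γ f = -Σ_S |S|^γ f̂(S) x^S`. -/
def fracLap {n : ℕ} (γ : ℝ) (f : (Fin n → Bool) → ℝ) : (Fin n → Bool) → ℝ :=
  fun x => -∑ S : Finset (Fin n), (S.card : ℝ) ^ γ * cubeFourier f S * walsh S x

/-- The discrete partial derivative `∇_j f`. -/
def cubeGrad {n : ℕ} (j : Fin n) (f : (Fin n → Bool) → ℝ) (x : Fin n → Bool) : ℝ :=
  (f (Function.update x j true) - f (Function.update x j false)) / 2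

/-- The squared length of the discrete gradient, `|∇f|²(x) = Σ_j |∇_j f(x)|²`. -/
def gradSq {n : ℕ} (f : (Fin n → Bool) → ℝ) (x : Fin n → Bool) : ℝ :=
  ∑ j : Fin n, (cubeGrad j f x) ^ 2

/-- The `L^p` norm `‖f‖_p = (E|f|^p)^{1/p}` on the Hamming cube. -/
def pNorm {n : ℕ} (p : ℝ) (f : (Fin n → Bool) → ℝ) : ℝ :=
  (cubeE fun x => |f x| ^ p) ^ (1 / p)

def spw (q a : ℝ) : ℝ := if 0 ≤ a then a ^ q else -(-a) ^ q

lemma spw_nn {q a : ℝ} (h : 0 ≤ a) : spw q a = a ^ q := by simp [spw, h]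

lemma spw_neg {q a : ℝ} (hq : q ≠ 0) : spw q (-a) = - spw q a := by
  rcases lt_trichotomy a 0 with h | h | h
  · rw [spw_nn (by linarith), spw, if_neg (by linarith)]; ring
  · subst h; simp [spw, Real.zero_rpow hq]
  · rw [spw_nn h.le, spw, if_neg (by linarith), neg_neg]

lemma sv_core1 {α u v : ℝ} (h0 : 0 < α) (h1 : α ≤ 1) (hv : 0 ≤ v) (huv : v ≤ u) :
    α * (u - v) ^ 2 ≤ (u ^ α - v ^ α) * (u ^ (2 - α) - v ^ (2 - α)) := by
  rcases eq_or_lt_of_le (hv.trans huv) with hu | hu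
  · have : v = u := by linarith
    subst this; simp
  obtain ⟨s, rfl⟩ : ∃ s, v = u * s := ⟨v / u, by field_simp⟩
  have hs0 : 0 ≤ s := by
    by_contra h; push Not at h; nlinarith
  have hs1 : s ≤ 1 := by
    by_contra h; push Not at h; nlinarith
  rw [Real.mul_rpow hu.le hs0, Real.mul_rpow hu.le hs0]
  have e : u ^ α * u ^ (2 - α) = u ^ 2 := by
    rw [← Real.rpow_add hu, ← Real.rpow_natCast]; norm_num
  have b1 : α * (1 - s) ≤ 1 - s ^ α := by
    have := rpow_one_add_le_one_add_mul_self (s := s - 1) (by linarith) h0.le h1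
    rw [add_sub_cancel] at this
    linarith
  have b2 : 1 - s ≤ 1 - s ^ (2 - α) := by
    have : s ^ (2 - α) ≤ s ^ (1:ℝ) := Real.rpow_le_rpow_of_exponent_ge_of_imp hs0 hs1 (by linarith)
      (by intro _ h; linarith)
    rw [Real.rpow_one] at this
    linarith
  have b3 := mul_le_mul b1 b2 (by linarith) (le_trans (by nlinarith) b1)
  calc _ = u ^ 2 * (α * (1 - s) * (1 - s)) := by ring
    _ ≤ u ^ 2 * ((1 - s ^ α) * (1 - s ^ (2 - α))) := by gcongr
    _ = _ := by rw [← e]; ring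

lemma sv_core2 {α u v : ℝ} (h0 : 0 < α) (h1 : α < 2) (hv : 0 ≤ v) (huv : v ≤ u) :
    min α (2 - α) * (u - v) ^ 2 ≤ (u ^ α - v ^ α) * (u ^ (2 - α) - v ^ (2 - α)) := by
  rcases le_total α 1 with h | h
  · refine le_trans ?_ (sv_core1 h0 h hv huv)
    gcongr; exact min_le_left _ _
  · have := sv_core1 (α := 2 - α) (by linarith) (by linarith) hv huv
    rw [sub_sub_cancel] at this
    rw [mul_comm (u ^ α - v ^ α)]
    refine le_trans ?_ this
    gcongr; exact min_le_right _ _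

def cp (p : ℝ) : ℝ := min (2 / p) (2 - 2 / p)

lemma cp_pos {p : ℝ} (hp : 1 < p) : 0 < cp p := by
  have : 2 / p < 2 := by rw [div_lt_iff₀ (by linarith)]; linarith
  exact lt_min (by positivity) (by linarith)

lemma cp_le {p : ℝ} : cp p ≤ 1 := by
  rcases le_total (2 / p) 1 with h | h
  · exact (min_le_left _ _).trans h
  · exact (min_le_right _ _).trans (by linarith)

lemma sv_nn {p a b : ℝ} (hp : 1 < p) (hb : 0 ≤ b) (hab : b ≤ a) :
    cp p / 2 * (a ^ (p / 2) - b ^ (p / 2)) ^ 2 ≤ (a - b) * (a ^ (p - 1) - b ^ (p - 1)) := by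
  have ha := hb.trans hab
  have h2 : 2 / p < 2 := by rw [div_lt_iff₀ (by linarith)]; linarith
  have := sv_core2 (α := 2 / p) (u := a ^ (p/2)) (v := b ^ (p/2)) (by positivity) h2
    (by positivity) (by gcongr)
  have hp0 : p ≠ 0 := by linarith
  simp only [← Real.rpow_mul ha, ← Real.rpow_mul hb] at this
  rw [show p / 2 * (2 / p) = 1 by field_simp, show p / 2 * (2 - 2 / p) = p - 1 by field_simp,
    Real.rpow_one, Real.rpow_one] at this
  refine le_trans ?_ this
  have := cp_pos hp
  gcongr
  exact (half_le_self this.le)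

lemma sv_mixed {p a b : ℝ} (hp : 1 < p) (ha : 0 ≤ a) (hb : 0 ≤ b) :
    cp p / 2 * (a ^ (p / 2) + b ^ (p / 2)) ^ 2 ≤ (a + b) * (a ^ (p - 1) + b ^ (p - 1)) := by
  have key : ∀ a : ℝ, 0 ≤ a → a * a ^ (p - 1) = (a ^ (p / 2)) ^ 2 := by
    intro a ha
    rcases eq_or_lt_of_le ha with h | h
    · subst h; rw [Real.zero_rpow (by linarith : p / 2 ≠ 0)]; simp
    · rw [← Real.rpow_natCast, ← Real.rpow_mul ha]
      nth_rw 1 [← Real.rpow_one a]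
      rw [← Real.rpow_add h]; congr 1; push_cast; ring
  have k1 := key a ha
  have k2 := key b hb
  have : 0 ≤ a * b ^ (p - 1) := by positivity
  have : 0 ≤ b * a ^ (p - 1) := by positivity
  have := cp_le (p := p)
  have e1 : cp p / 2 * (a ^ (p / 2) + b ^ (p / 2)) ^ 2 ≤ 1 / 2 * (a ^ (p / 2) + b ^ (p / 2)) ^ 2 := by
    gcongr
  nlinarith [sq_nonneg (a ^ (p / 2) - b ^ (p / 2))]

lemma sv_le {p a b : ℝ} (hp : 1 < p) (hab : b ≤ a) :
    cp p / 2 * (spw (p / 2) a - spw (p / 2) b) ^ 2 ≤ (a - b) * (spw (p - 1) a - spw (p - 1) b) := by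
  by_cases hb : 0 ≤ b
  · rw [spw_nn hb, spw_nn hb, spw_nn (hb.trans hab), spw_nn (hb.trans hab)]
    exact sv_nn hp hb hab
  · by_cases ha : 0 ≤ a
    · have := sv_mixed hp ha (by linarith : 0 ≤ -b)
      simp only [spw, ha, hb, if_true, if_false]
      simpa [sub_neg_eq_add, ← sub_eq_add_neg] using this
    · have := sv_nn hp (a := -b) (b := -a) (by linarith) (by linarith)
      simp only [spw, ha, hb, if_false]
      convert this using 1 <;> ring

lemma sv {p a b : ℝ} (hp : 1 < p) :
    cp p / 2 * (spw (p / 2) a - spw (p / 2) b) ^ 2 ≤ (a - b) * (spw (p - 1) a - spw (p - 1) b) := by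
  rcases le_total b a with h | h
  · exact sv_le hp h
  · have := sv_le hp h
    convert this using 1 <;> ring

lemma spw_deriv {p a : ℝ} (hp : 1 < p) : |a| ^ (p - 2) * a = spw (p - 1) a := by
  rcases lt_trichotomy a 0 with h | h | h
  · rw [spw, if_neg (by linarith), abs_of_neg h, show p - 1 = (p - 2) + 1 by ring,
      Real.rpow_add (by linarith), Real.rpow_one]; ring
  · subst h; rw [spw_nn le_rfl, Real.zero_rpow (by linarith), mul_zero]
  · rw [spw_nn h.le, abs_of_pos h, show p - 1 = (p - 2) + 1 by ring,
      Real.rpow_add (by linarith), Real.rpow_one]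

lemma spw_sq {p a : ℝ} : spw (p / 2) a ^ 2 = |a| ^ p := by
  have key : ∀ a : ℝ, 0 ≤ a → (a ^ (p / 2)) ^ 2 = a ^ p := by
    intro a ha
    rw [← Real.rpow_natCast, ← Real.rpow_mul ha]; congr 1; push_cast; ring
  by_cases h : 0 ≤ a
  · rw [spw_nn h, key a h, abs_of_nonneg h]
  · rw [spw, if_neg h, neg_sq, key _ (by linarith), abs_of_neg (by linarith)]

/-- pointwise bound -/
lemma ptw {β x : ℝ} (h0 : 0 < β) (h2 : β < 2) :
    1 / 4 - 5 / 4 * (x - 1) ^ 2 ≤ spw β x := by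
  by_cases hx : 0 ≤ x
  · rw [spw_nn hx]
    rcases le_total (1/2) x with h | h
    · have h1 : (1 / 2 : ℝ) ^ (2 : ℝ) ≤ (1 / 2) ^ β :=
        Real.rpow_le_rpow_of_exponent_ge (by norm_num) (by norm_num) h2.le
      have h3 : (1 / 2 : ℝ) ^ β ≤ x ^ β := by gcongr
      have h4 : (1 / 2 : ℝ) ^ (2 : ℝ) = 1 / 4 := by
        rw [Real.rpow_two]; norm_num
      nlinarith [sq_nonneg (x - 1)]
    · have : 0 ≤ x ^ β := by positivity
      nlinarith
  · rw [spw, if_neg hx]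
    push Not at hx
    have h1 : (-x) ^ β ≤ (1 - x) ^ β := Real.rpow_le_rpow (by linarith) (by linarith) h0.le
    have h3 : (1 - x) ^ β ≤ (1 - x) ^ (2 : ℝ) :=
      Real.rpow_le_rpow_of_exponent_le (by linarith) h2.le
    rw [Real.rpow_two] at h3
    nlinarith

lemma ptw_scaled {p a m : ℝ} (hp : 1 < p) (hm : 0 < m) :
    m ^ (2 / p) * (1 / 4 - 5 / 4 * (spw (p / 2) a / m - 1) ^ 2) ≤ a := by
  have h2 : 2 / p < 2 := by rw [div_lt_iff₀ (by linarith)]; linarith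
  have h := ptw (β := 2 / p) (x := spw (p / 2) a / m) (by positivity) h2
  have key : ∀ a : ℝ, 0 ≤ a → m ^ (2 / p) * (a ^ (p / 2) / m) ^ (2 / p) = a := by
    intro a ha
    rw [← Real.mul_rpow hm.le (by positivity), mul_div_cancel₀ _ hm.ne', ← Real.rpow_mul ha,
      show p / 2 * (2 / p) = 1 by field_simp, Real.rpow_one]
  have e : m ^ (2 / p) * spw (2 / p) (spw (p / 2) a / m) = a := by
    by_cases ha : 0 ≤ a
    · rw [spw_nn ha, spw_nn (by positivity), key a ha]
    · have := key (-a) (by linarith)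
      have q0 : 2 / p ≠ 0 := by positivity
      rw [show spw (p / 2) a = -(-a) ^ (p / 2) by rw [spw, if_neg ha], neg_div, spw_neg q0,
        spw_nn (div_nonneg (Real.rpow_nonneg (by linarith) _) hm.le)]
      linarith
  calc _ ≤ m ^ (2 / p) * spw (2 / p) (spw (p / 2) a / m) := by gcongr
    _ = a := e

section cube
variable {n : ℕ}

lemma cubeE_add (f g : (Fin n → Bool) → ℝ) : cubeE (fun x => f x + g x) = cubeE f + cubeE g := by
  simp [cubeE, Finset.sum_add_distrib, add_div]
lemma cubeE_sub (f g : (Fin n → Bool) → ℝ) : cubeE (fun x => f x - g x) = cubeE f - cubeE g := by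
  simp [cubeE, Finset.sum_sub_distrib, sub_div]
lemma cubeE_mul (c : ℝ) (f : (Fin n → Bool) → ℝ) : cubeE (fun x => c * f x) = c * cubeE f := by
  simp [cubeE, ← Finset.mul_sum, mul_div_assoc]
lemma cubeE_const (c : ℝ) : cubeE (fun _ : Fin n → Bool => c) = c := by
  simp [cubeE]
lemma cubeE_neg (f : (Fin n → Bool) → ℝ) : cubeE (fun x => - f x) = - cubeE f := by
  simp [cubeE, neg_div]
lemma cubeE_mono {f g : (Fin n → Bool) → ℝ} (h : ∀ x, f x ≤ g x) : cubeE f ≤ cubeE g := by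
  unfold cubeE; gcongr; exact h _
lemma cubeE_sum {ι : Type*} (s : Finset ι) (f : ι → (Fin n → Bool) → ℝ) :
    cubeE (fun x => ∑ i ∈ s, f i x) = ∑ i ∈ s, cubeE (f i) := by
  unfold cubeE; rw [Finset.sum_comm, Finset.sum_div]

lemma var_aux {p : ℝ} (hp : 1 < p) (f : (Fin n → Bool) → ℝ) (hf : cubeE f = 0)
    (hm : 0 < cubeE fun x => spw (p / 2) (f x)) :
    (cubeE fun x => spw (p / 2) (f x) ^ 2) ≤
      6 * ((cubeE fun x => spw (p / 2) (f x) ^ 2) - (cubeE fun x => spw (p / 2) (f x)) ^ 2) := by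
  set g : (Fin n → Bool) → ℝ := fun x => spw (p / 2) (f x) with hg
  set m := cubeE g with hmd
  have h1 := cubeE_mono (fun x => ptw_scaled (a := f x) hp hm)
  rw [cubeE_mul, show (cubeE fun x => f x) = 0 from hf] at h1
  have hmp : 0 < m ^ (2 / p) := by positivity
  have h2 : (cubeE fun x => (1 / 4 - 5 / 4 * (g x / m - 1) ^ 2)) ≤ 0 := by
    by_contra h; push Not at h
    have := mul_pos hmp h
    exact absurd h1 (not_le.mpr this)
  have h3 : (cubeE fun x => (1 / 4 - 5 / 4 * (g x / m - 1) ^ 2))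
      = 1 / 4 - 5 / 4 * ((1 / m ^ 2) * (cubeE fun x => g x ^ 2) - 1) := by
    have : (fun x => (1 / 4 - 5 / 4 * (g x / m - 1) ^ 2)) =
      fun x => (-1) - ((5 / 4 / m ^ 2) * g x ^ 2 - (5 / 2 / m) * g x) := by
      funext x; field_simp; ring
    rw [this, cubeE_sub, cubeE_sub, cubeE_mul, cubeE_mul, cubeE_const, ← hmd]
    field_simp; ring
  rw [h3] at h2
  have h4 : 6 / 5 ≤ (1 / m ^ 2) * (cubeE fun x => g x ^ 2) := by linarith
  have h5 : 6 / 5 * m ^ 2 ≤ cubeE fun x => g x ^ 2 := by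
    rw [one_div, inv_mul_eq_div, le_div_iff₀ (by positivity)] at h4
    exact h4
  linarith

lemma var_bound {p : ℝ} (hp : 1 < p) (f : (Fin n → Bool) → ℝ) (hf : cubeE f = 0) :
    (cubeE fun x => spw (p / 2) (f x) ^ 2) ≤
      6 * ((cubeE fun x => spw (p / 2) (f x) ^ 2) - (cubeE fun x => spw (p / 2) (f x)) ^ 2) := by
  rcases lt_trichotomy (cubeE fun x => spw (p / 2) (f x)) 0 with h | h | h
  · have q0 : p / 2 ≠ 0 := by positivity
    have := var_aux hp (fun x => - f x) (by rw [cubeE_neg, hf, neg_zero])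
      (by simp only [spw_neg q0]; rw [cubeE_neg]; linarith)
    simp only [spw_neg q0, neg_sq] at this
    rw [cubeE_neg, neg_sq] at this
    exact this
  · rw [h]
    have : 0 ≤ cubeE fun x => spw (p / 2) (f x) ^ 2 := by
      rw [← cubeE_const (n := n) 0]; exact cubeE_mono fun x => sq_nonneg _
    linarith
  · exact var_aux hp f hf h

def flp (j : Fin n) (x : Fin n → Bool) : Fin n → Bool := Function.update x j (!(x j))

lemma flp_flp (j : Fin n) (x : Fin n → Bool) : flp j (flp j x) = x := by
  simp [flp]

lemma cubeE_flp (j : Fin n) (h : (Fin n → Bool) → ℝ) : cubeE (fun x => h (flp j x)) = cubeE h := by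
  unfold cubeE
  congr 1
  exact Equiv.sum_comp (⟨flp j, flp j, flp_flp j, flp_flp j⟩ : Equiv.Perm (Fin n → Bool)) h

def gen (f : (Fin n → Bool) → ℝ) (x : Fin n → Bool) : ℝ := ∑ j, (f (flp j x) - f x) / 2

lemma walsh_flp (S : Finset (Fin n)) (j : Fin n) (x : Fin n → Bool) :
    walsh S (flp j x) = if j ∈ S then - walsh S x else walsh S x := by
  split_ifs with h
  · unfold walsh
    rw [← Finset.mul_prod_erase S _ h, ← Finset.mul_prod_erase S _ h, ← neg_mul]
    congr 1
    · cases hx : x j <;> simp [flp, hx]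
    · refine Finset.prod_congr rfl fun i hi => ?_
      rw [flp, Function.update_of_ne (Finset.ne_of_mem_erase hi)]
  · unfold walsh
    refine Finset.prod_congr rfl fun i hi => ?_
    rw [flp, Function.update_of_ne (by rintro rfl; exact h hi)]

lemma gen_walsh (S : Finset (Fin n)) (x : Fin n → Bool) :
    gen (walsh S) x = - (S.card : ℝ) * walsh S x := by
  have : ∀ j, (walsh S (flp j x) - walsh S x) / 2 = if j ∈ S then - walsh S x else 0 := by
    intro j; rw [walsh_flp]; split_ifs <;> ring
  simp [gen, this]

lemma gen_sum (c : Finset (Fin n) → ℝ) (x : Fin n → Bool) :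
    gen (fun x => ∑ S, c S * walsh S x) x = ∑ S, c S * (- (S.card : ℝ) * walsh S x) := by
  simp only [← gen_walsh]
  simp only [gen, Finset.mul_sum]
  rw [Finset.sum_comm]
  refine Finset.sum_congr rfl fun j _ => ?_
  rw [← Finset.sum_sub_distrib, Finset.sum_div]
  refine Finset.sum_congr rfl fun S _ => ?_
  ring

/-- Dirichlet form -/
lemma dirichlet (f h : (Fin n → Bool) → ℝ) :
    cubeE (fun x => h x * gen f x) =
      - ∑ j, cubeE (fun x => (f x - f (flp j x)) * (h x - h (flp j x))) / 4 := by
  have : (fun x => h x * gen f x) = fun x => ∑ j, h x * ((f (flp j x) - f x) / 2) := by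
    funext x; rw [gen, Finset.mul_sum]
  rw [this, cubeE_sum, ← Finset.sum_neg_distrib]
  refine Finset.sum_congr rfl fun j _ => ?_
  have e := cubeE_flp j (fun x => h x * ((f (flp j x) - f x) / 2))
  simp only [flp_flp] at e
  have e2 : (fun x => (f x - f (flp j x)) * (h x - h (flp j x))) =
    fun x => (-2) * (h x * ((f (flp j x) - f x) / 2) + h (flp j x) * ((f x - f (flp j x)) / 2)) := by
    funext x; ring
  rw [e2, cubeE_mul, cubeE_add, e]; ring

lemma inversion (f : (Fin n → Bool) → ℝ) (x : Fin n → Bool) :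
    ∑ S, cubeFourier f S * walsh S x = f x := by
  have key : ∀ y : Fin n → Bool, ∑ S, walsh S y * walsh S x = if y = x then 2 ^ n else 0 := by
    intro y
    simp only [walsh, ← Finset.prod_mul_distrib]
    have := Finset.prod_one_add (R := ℝ) (Finset.univ : Finset (Fin n))
      (f := fun i => (if y i then (1:ℝ) else -1) * (if x i then (1:ℝ) else -1))
    rw [Finset.powerset_univ] at this
    rw [← this]
    split_ifs with h
    · subst h
      rw [Finset.prod_congr rfl (g := fun _ => (2:ℝ))]
      · simp
      · intro i _; split_ifs <;> norm_num
    · obtain ⟨i, hi⟩ := Function.ne_iff.mp h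
      refine Finset.prod_eq_zero (Finset.mem_univ i) ?_
      cases hy : y i <;> cases hx : x i <;> simp_all
  have : ∀ S, cubeFourier f S * walsh S x = cubeE (fun y => f y * (walsh S y * walsh S x)) := by
    intro S
    rw [cubeFourier, mul_comm, ← cubeE_mul]; congr 1; funext y; ring
  simp only [this]
  rw [← cubeE_sum]
  simp only [← Finset.mul_sum, key]
  simp [cubeE]

lemma walsh_empty (x : Fin n → Bool) : walsh ∅ x = 1 := by simp [walsh]

lemma cubeE_gen (f : (Fin n → Bool) → ℝ) : cubeE (gen f) = 0 := by
  have := dirichlet f (fun _ => 1)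
  simpa [cubeE] using this

lemma cubeE_walsh {S : Finset (Fin n)} (h : S.Nonempty) : cubeE (walsh S) = 0 := by
  have h1 := cubeE_gen (walsh S)
  rw [show gen (walsh S) = fun x => - (S.card : ℝ) * walsh S x from funext (gen_walsh S),
    cubeE_mul] at h1
  have : (S.card : ℝ) ≠ 0 := by exact_mod_cast h.card_pos.ne'
  rcases mul_eq_zero.mp h1 with h | h
  · exact absurd (neg_eq_zero.mp h) this
  · exact h

lemma poincare (g : (Fin n → Bool) → ℝ) :
    (cubeE fun x => g x ^ 2) - cubeE g ^ 2 ≤ - cubeE (fun x => g x * gen g x) := by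
  have e1 : cubeE (fun x => g x ^ 2) = ∑ S, cubeFourier g S ^ 2 := by
    have : (fun x => g x ^ 2) = fun x => ∑ S, cubeFourier g S * (g x * walsh S x) := by
      funext x
      rw [sq]; nth_rw 2 [← inversion g x]
      rw [Finset.mul_sum]; exact Finset.sum_congr rfl fun S _ => by ring
    rw [this, cubeE_sum]
    refine Finset.sum_congr rfl fun S _ => ?_
    rw [cubeE_mul, sq]; rfl
  have e2 : cubeE (fun x => g x * gen g x) = ∑ S, - (S.card : ℝ) * cubeFourier g S ^ 2 := by
    have : (fun x => g x * gen g x) =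
        fun x => ∑ S, (- (S.card : ℝ) * cubeFourier g S) * (g x * walsh S x) := by
      funext x
      have : gen g x = gen (fun x => ∑ S, cubeFourier g S * walsh S x) x := by
        congr 1; funext x; exact (inversion g x).symm
      rw [this, gen_sum, Finset.mul_sum]; exact Finset.sum_congr rfl fun S _ => by ring
    rw [this, cubeE_sum]
    refine Finset.sum_congr rfl fun S _ => ?_
    rw [cubeE_mul, sq, ← mul_assoc]; rfl
  have e3 : cubeE g = cubeFourier g ∅ := by
    simp [cubeFourier, walsh_empty]
  rw [e1, e2, e3, ← Finset.sum_neg_distrib, ← Finset.add_sum_erase _ _ (Finset.mem_univ ∅),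
    ← Finset.add_sum_erase _ (fun S => -(-(S.card : ℝ) * cubeFourier g S ^ 2)) (Finset.mem_univ ∅)]
  have : ∑ S ∈ Finset.univ.erase ∅, cubeFourier g S ^ 2 ≤
      ∑ S ∈ Finset.univ.erase ∅, -(-(S.card : ℝ) * cubeFourier g S ^ 2) := by
    refine Finset.sum_le_sum fun S hS => ?_
    have h1 : (1 : ℝ) ≤ S.card := by
      exact_mod_cast (Finset.nonempty_iff_ne_empty.mpr (Finset.ne_of_mem_erase hS)).card_pos
    nlinarith [sq_nonneg (cubeFourier g S)]
  simp only [Finset.card_empty, Nat.cast_zero]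
  linarith

lemma key_ineq {p : ℝ} (hp : 1 < p) (f : (Fin n → Bool) → ℝ) (hf : cubeE f = 0) :
    cubeE (fun x => spw (p - 1) (f x) * gen f x) ≤ - (cp p / 12) * cubeE (fun x => |f x| ^ p) := by
  have h1 := var_bound hp f hf
  have h2 := poincare (fun x => spw (p / 2) (f x))
  have h3 : cp p / 2 * (- cubeE (fun x => spw (p / 2) (f x) * gen (fun x => spw (p / 2) (f x)) x))
      ≤ - cubeE (fun x => spw (p - 1) (f x) * gen f x) := by
    rw [dirichlet, dirichlet f, neg_neg, neg_neg, Finset.mul_sum]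
    refine Finset.sum_le_sum fun j _ => ?_
    rw [← mul_div_assoc, ← cubeE_mul]
    gcongr
    refine cubeE_mono fun x => ?_
    rw [← sq]
    exact sv hp
  simp only [spw_sq] at h1 h2
  have := cp_pos hp
  nlinarith

lemma heat_zero (f : (Fin n → Bool) → ℝ) : heat1 0 f = f := by
  funext x; simp [heat1, inversion]

lemma heat_deriv (f : (Fin n → Bool) → ℝ) (t : ℝ) (x : Fin n → Bool) :
    HasDerivAt (fun t => heat1 t f x) (gen (heat1 t f) x) t := by
  have : gen (heat1 t f) x = ∑ S : Finset (Fin n),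
      (Real.exp (-t * (S.card : ℝ)) * (-1 * (S.card : ℝ))) * cubeFourier f S * walsh S x := by
    unfold heat1
    rw [gen_sum]
    exact Finset.sum_congr rfl fun S _ => by ring
  rw [this]
  unfold heat1
  refine HasDerivAt.fun_sum fun S _ => ?_
  exact ((((hasDerivAt_id t).neg.mul_const _).exp).mul_const _).mul_const _

lemma heat_mean (f : (Fin n → Bool) → ℝ) (hf : cubeE f = 0) (t : ℝ) : cubeE (heat1 t f) = 0 := by
  unfold heat1
  rw [cubeE_sum]
  refine Finset.sum_eq_zero fun S _ => ?_
  rw [cubeE_mul]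
  rcases S.eq_empty_or_nonempty with h | h
  · subst h
    have : cubeFourier f ∅ = 0 := by simpa [cubeFourier, walsh_empty] using hf
    simp [this]
  · rw [show cubeE (fun x => walsh S x) = 0 from cubeE_walsh h, mul_zero]

lemma decay {p : ℝ} (hp : 1 < p) (f : (Fin n → Bool) → ℝ) (hf : cubeE f = 0) {t : ℝ} (ht : 0 < t) :
    cubeE (fun x => |heat1 t f x| ^ p) ≤
      Real.exp (-(p * (cp p / 12)) * t) * cubeE (fun x => |f x| ^ p) := by
  set k := p * (cp p / 12) with hk
  have hd : ∀ s, HasDerivAt (fun s => Real.exp (k * s) * cubeE (fun x => |heat1 s f x| ^ p))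
      (Real.exp (k * s) * (k * 1) * cubeE (fun x => |heat1 s f x| ^ p) +
       Real.exp (k * s) * (p * cubeE (fun x => spw (p - 1) (heat1 s f x) * gen (heat1 s f) x))) s := by
    intro s
    refine HasDerivAt.mul (((hasDerivAt_id s).const_mul k).exp) ?_
    rw [← cubeE_mul]
    unfold cubeE
    refine HasDerivAt.div_const (HasDerivAt.fun_sum fun x _ => ?_) _
    have := (hasDerivAt_abs_rpow (heat1 s f x) hp).comp s (heat_deriv f s x)
    have e : p * (spw (p - 1) (heat1 s f x) * gen (heat1 s f) x) =
        p * |heat1 s f x| ^ (p - 2) * heat1 s f x * gen (heat1 s f) x := by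
      rw [← spw_deriv hp]; ring
    rw [e]
    exact this
  have hanti : Antitone (fun s => Real.exp (k * s) * cubeE (fun x => |heat1 s f x| ^ p)) := by
    refine antitone_of_hasDerivAt_nonpos hd fun s => ?_
    have h1 := key_ineq hp (heat1 s f) (heat_mean f hf s)
    have h2 := mul_le_mul_of_nonneg_left h1 (by linarith : 0 ≤ p)
    have h3 := mul_le_mul_of_nonneg_left h2 (Real.exp_pos (k * s)).le
    simp only [Pi.zero_apply]
    rw [hk] at *
    linarith
  have := hanti ht.le
  simp only [mul_zero, Real.exp_zero, one_mul, heat_zero] at this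
  have h5 : Real.exp (-k * t) * Real.exp (k * t) = 1 := by
    rw [← Real.exp_add]; simp
  calc _ = Real.exp (-k * t) * (Real.exp (k * t) * cubeE (fun x => |heat1 t f x| ^ p)) := by
        rw [← mul_assoc, h5, one_mul]
    _ ≤ _ := by gcongr

end cube

/-- Spectral gap for the heat semigroup in `L^p`, `1 < p < ∞`: there is an
absolute constant `C₁ > 0` such that with `k₁ = C₁ · c_p`,
`c_p = 2 min(1/p, 1/p')`, `p' = p/(p-1)`, one has
`‖e^{tΔ}(f - Ef)‖_p ≤ e^{-k₁ t} ‖f - Ef‖_p` for all `n`, `f`, `t > 0`. -/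
theorem stmt5 :
    ∃ C₁ : ℝ, 0 < C₁ ∧
      ∀ p : ℝ, 1 < p →
        ∀ (n : ℕ) (f : (Fin n → Bool) → ℝ) (t : ℝ), 0 < t →
          pNorm p (heat1 t fun x => f x - cubeE f) ≤
            Real.exp (-(C₁ * (2 * min (1 / p) (1 / (p / (p - 1))))) * t) *
              pNorm p (fun x => f x - cubeE f) := by
  refine ⟨1 / 12, by norm_num, fun p hp n f t ht => ?_⟩
  have hp0 : 0 < p := by linarith
  have h0 : cubeE (fun x => f x - cubeE f) = 0 := by
    rw [cubeE_sub, cubeE_const]; exact sub_self _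
  have h := decay hp (fun x => f x - cubeE f) h0 ht
  have hnn : ∀ g : (Fin n → Bool) → ℝ, 0 ≤ cubeE (fun x => |g x| ^ p) := by
    intro g
    rw [← cubeE_const (n := n) 0]; exact cubeE_mono fun x => by positivity
  have hc : 2 * min (1 / p) (1 / (p / (p - 1))) = cp p := by
    rw [cp, mul_min_of_nonneg _ _ (by norm_num : (0:ℝ) ≤ 2)]
    congr 1
    · ring
    · have : p - 1 ≠ 0 := by linarith
      field_simp
  have h2 := Real.rpow_le_rpow (hnn _) h (by positivity : 0 ≤ 1 / p)
  rw [Real.mul_rpow (Real.exp_pos _).le (hnn _), ← Real.exp_mul] at h2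
  rw [hc]
  unfold pNorm
  convert h2 using 3
  field_simp
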